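/- Let 𝒯 be a triangulated category with countable direct sums and 𝔦 a homological ideal with enough projective objects that is compatible with countable direct sums. Then the pair (⟨Proj_𝔦⟩, 𝒩_𝔦) is complementary: 𝒯_*(P, N) = 0 for all P in the localising subcategory generated by the 𝔦-projective objects and all 𝔦-contractible N, and every object A fits into an exact triangle Ã → A → N → Ã[1] with Ã ∈ ⟨Proj_𝔦⟩ and N ∈ 𝒩_𝔦. -/

import Mathlib

open CategoryTheory Limits Pretriangulated

universe v u v' u'

/-- An ideal in a preadditive category. -/
structure CatIdeal (C : Type u) [Category.{v} C] [Preadditive C] where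
  carrier : ∀ A B : C, AddSubgroup (A ⟶ B)
  comp_mem_left : ∀ {A B X : C} (f : A ⟶ B) (g : B ⟶ X),
    f ∈ carrier A B → f ≫ g ∈ carrier A X
  comp_mem_right : ∀ {A B X : C} (h : X ⟶ A) (f : A ⟶ B),
    f ∈ carrier A B → h ≫ f ∈ carrier X B

/-- `P` is `𝔦`-projective iff every morphism of `𝔦` out of `P` vanishes. -/
def IsProjI {C : Type u} [Category.{v} C] [Preadditive C]
    (I : CatIdeal C) (P : C) : Prop :=
  ∀ (B : C) (g : P ⟶ B), g ∈ I.carrier P B → g = 0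

/-- A class of objects is localising if it is closed under isomorphisms, shifts,
exact triangles and countable direct sums. -/
def IsLocalising (C : Type u) [Category.{v} C] [Preadditive C] [HasZeroObject C]
    [HasShift C ℤ] [∀ n : ℤ, (shiftFunctor C n).Additive] [Pretriangulated C]
    [HasCountableCoproducts C] (T : Set C) : Prop :=
  (∀ {X Y : C}, (X ≅ Y) → X ∈ T → Y ∈ T) ∧
  (∀ X ∈ T, ∀ n : ℤ, X⟦n⟧ ∈ T) ∧
  (∀ T' : Triangle C, T' ∈ (distTriang C) → T'.obj₁ ∈ T → T'.obj₂ ∈ T → T'.obj₃ ∈ T) ∧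
  (∀ (ι : Type) [Countable ι] (X : ι → C), (∀ i, X i ∈ T) → (∐ X) ∈ T)

/-- The localising subcategory generated by a class of objects. -/
def localisingClosure (C : Type u) [Category.{v} C] [Preadditive C] [HasZeroObject C]
    [HasShift C ℤ] [∀ n : ℤ, (shiftFunctor C n).Additive] [Pretriangulated C]
    [HasCountableCoproducts C] (S : Set C) : Set C :=
  ⋂₀ {T : Set C | S ⊆ T ∧ IsLocalising C T}

/-!
Everything is measured against maps out of `𝔦`-projective objects. Starting from an `𝔦`-projective
`a₀` with an `𝔦`-epic map to `X`, attach `𝔦`-projective cells covering the fibre of `aₙ ⟶ X`; this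
gives a tower whose maps kill, modulo `𝔦`, the kernel of `aₙ ⟶ X`. On maps from an `𝔦`-projective
`P`, the shift `σ` of `∐ aₙ` therefore vanishes on the kernel of `∐ aₙ ⟶ ∐ X`, so `𝟙 - σ` is the
identity there. Hence `𝟙 - σ` has the same kernel and cokernel on these maps as its analogue on
`∐ X`, whose cokernel is `X`, and the homotopy colimit `Ã` of the tower satisfies
`Hom(P, Ã) ≅ Hom(P, X)`. So the cone of `Ã ⟶ X` is `𝔦`-contractible.
-/

section LocalisingClosure

variable {C : Type u} [Category.{v} C] [Preadditive C] [HasZeroObject C] [HasShift C ℤ]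
  [∀ n : ℤ, (shiftFunctor C n).Additive] [Pretriangulated C] [HasCountableCoproducts C]

lemma isLocalising_localisingClosure (S : Set C) : IsLocalising C (localisingClosure C S) :=
  ⟨fun e hX T hT => hT.2.1 e (hX T hT),
    fun X hX n T hT => hT.2.2.1 X (hX T hT) n,
    fun T' hT' h₁ h₂ T hT => hT.2.2.2.1 T' hT' (h₁ T hT) (h₂ T hT),
    fun ι _ X hX T hT => hT.2.2.2.2 ι X fun i => hX i T hT⟩

lemma subset_localisingClosure (S : Set C) : S ⊆ localisingClosure C S :=
  fun _ hX _ hT => hT.1 hX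

lemma localisingClosure_subset {S T : Set C} (hST : S ⊆ T) (hT : IsLocalising C T) :
    localisingClosure C S ⊆ T :=
  fun _ hX => hX T ⟨hST, hT⟩

lemma isLocalising_leftOrthogonal (N : ObjectProperty C) [N.IsStableUnderShift ℤ] :
    IsLocalising C {X | N.leftOrthogonal X} :=
  ⟨fun e hX => N.leftOrthogonal.prop_of_iso e hX,
    fun X hX n => N.leftOrthogonal.le_shift n X hX,
    fun T hT h₁ h₂ => N.leftOrthogonal.ext_of_isTriangulatedClosed₃ T hT h₁ h₂,
    fun _ _ X hX _ f hY => Sigma.hom_ext _ _ fun i => by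
      rw [hX i (Sigma.ι X i ≫ f) hY, comp_zero]⟩

end LocalisingClosure

lemma exists_eq_comp_sigmaMap {C : Type u} [Category.{v} C] [Preadditive C] [HasZeroObject C]
    [HasShift C ℤ] [∀ n : ℤ, (shiftFunctor C n).Additive] [Pretriangulated C]
    {J : Type*} [HasCoproductsOfShape J C] {K X Y : J → C} {k : ∀ j, K j ⟶ X j}
    {f : ∀ j, X j ⟶ Y j} {d : ∀ j, Y j ⟶ (K j)⟦(1 : ℤ)⟧}
    (hT : ∀ j, Triangle.mk (k j) (f j) (d j) ∈ distTriang C)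
    {W : C} (u : W ⟶ ∐ X) (hu : u ≫ Limits.Sigma.map f = 0) :
    ∃ w, u = w ≫ Limits.Sigma.map k := by
  obtain ⟨E, e, d', hE⟩ := distinguished_cocone_triangle (Limits.Sigma.map k)
  have hke : Limits.Sigma.map k ≫ e = 0 := comp_distTriang_mor_zero₁₂ _ hE
  have hkι (j : J) : k j ≫ Sigma.ι X j ≫ e = 0 := by simpa using Sigma.ι K j ≫= hke
  have hfactor (j : J) : ∃ c, Sigma.ι X j ≫ e = f j ≫ c :=
    Triangle.yoneda_exact₂ _ (hT j) _ (hkι j)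
  choose c hc using hfactor
  have hec : e = Limits.Sigma.map f ≫ Sigma.desc c := Sigma.hom_ext _ _ fun j => by simp [hc]
  have hue : u ≫ e = 0 := by rw [hec, ← Category.assoc, hu, zero_comp]
  exact Triangle.coyoneda_exact₂ _ hE u hue

section Telescope

variable {C : Type u} [Category.{v} C] [HasCoproductsOfShape ℕ C]

/-- The map `∐ aₙ ⟶ ∐ aₙ` induced by the transition maps of a tower `a₀ ⟶ a₁ ⟶ ⋯`. A cone of
`𝟙 - telescopeShift i` is a homotopy colimit of the tower. -/
noncomputable def telescopeShift {a : ℕ → C} (i : ∀ n, a n ⟶ a (n + 1)) : ∐ a ⟶ ∐ a :=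
  Sigma.desc fun n => i n ≫ Sigma.ι a (n + 1)

/-- The map `∐ X ⟶ X` from the countable copower of `X` that is the identity on each summand. -/
noncomputable def codiagonal (X : C) : ∐ (fun _ : ℕ => X) ⟶ X :=
  Sigma.desc fun _ => 𝟙 X

@[simp]
lemma ι_telescopeShift {a : ℕ → C} (i : ∀ n, a n ⟶ a (n + 1)) (n : ℕ) :
    Sigma.ι a n ≫ telescopeShift i = i n ≫ Sigma.ι a (n + 1) :=
  Sigma.ι_desc _ _

lemma telescopeShift_comp_sigmaMap {a b : ℕ → C} {i : ∀ n, a n ⟶ a (n + 1)}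
    {k : ∀ n, b n ⟶ b (n + 1)} {f : ∀ n, a n ⟶ b n} (h : ∀ n, i n ≫ f (n + 1) = f n ≫ k n) :
    telescopeShift i ≫ Limits.Sigma.map f = Limits.Sigma.map f ≫ telescopeShift k :=
  Sigma.hom_ext _ _ fun n => by
    rw [← Category.assoc, ι_telescopeShift, Category.assoc, Sigma.ι_map, ← Category.assoc, h,
      Category.assoc, ← ι_telescopeShift, ← Category.assoc, ← Category.assoc, Sigma.ι_map]

@[simp]
lemma ι_codiagonal (X : C) (n : ℕ) : Sigma.ι (fun _ : ℕ => X) n ≫ codiagonal X = 𝟙 X :=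
  Sigma.ι_desc _ _

end Telescope

section ConstantTelescope

variable {C : Type u} [Category.{v} C] [Preadditive C] [HasCoproductsOfShape ℕ C] (X : C)

/-- The shift of the countable copower of `X`, i.e. `telescopeShift` of the constant tower. -/
noncomputable abbrev copowerShift : ∐ (fun _ : ℕ => X) ⟶ ∐ (fun _ : ℕ => X) :=
  telescopeShift fun _ => 𝟙 X

lemma id_sub_copowerShift_comp_codiagonal : (𝟙 _ - copowerShift X) ≫ codiagonal X = 0 :=
  Sigma.hom_ext _ _ fun n => by
    simp [Preadditive.sub_comp, Preadditive.comp_sub, ← Category.assoc]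

/-- The retraction of `𝟙 - copowerShift X` which, with the section `Sigma.ι _ 0` of the
codiagonal, splits the sequence `∐ X ⟶ ∐ X ⟶ X`. -/
noncomputable def copowerRetraction : ∐ (fun _ : ℕ => X) ⟶ ∐ (fun _ : ℕ => X) :=
  Sigma.desc fun n => -∑ m ∈ Finset.range n, Sigma.ι (fun _ => X) m

@[simp]
lemma ι_copowerRetraction (n : ℕ) : Sigma.ι (fun _ => X) n ≫ copowerRetraction X =
    -∑ m ∈ Finset.range n, Sigma.ι (fun _ => X) m :=
  Sigma.ι_desc _ _

lemma id_sub_copowerShift_comp_copowerRetraction :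
    (𝟙 _ - copowerShift X) ≫ copowerRetraction X = 𝟙 _ :=
  Sigma.hom_ext _ _ fun n => by
    simp [Preadditive.sub_comp, Preadditive.comp_sub, ← Category.assoc, Finset.sum_range_succ]

lemma copowerRetraction_comp_id_sub_copowerShift :
    copowerRetraction X ≫ (𝟙 _ - copowerShift X) =
      𝟙 _ - codiagonal X ≫ Sigma.ι (fun _ => X) 0 :=
  Sigma.hom_ext _ _ fun n => by
    have telescoping := Finset.sum_range_sub (Sigma.ι fun _ : ℕ => X) n
    rw [Finset.sum_sub_distrib] at telescoping
    simp only [Preadditive.comp_sub, Preadditive.neg_comp, Preadditive.sum_comp,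
      ← Category.assoc, Category.comp_id, Category.id_comp, ι_copowerRetraction,
      ι_telescopeShift, ι_codiagonal, sub_neg_eq_add, ← telescoping]
    abel

instance : Mono (𝟙 _ - copowerShift X) :=
  SplitMono.mono ⟨_, id_sub_copowerShift_comp_copowerRetraction X⟩

lemma exists_eq_comp_id_sub_copowerShift {W : C} {w : W ⟶ ∐ fun _ : ℕ => X}
    (hw : w ≫ codiagonal X = 0) : ∃ v, w = v ≫ (𝟙 _ - copowerShift X) :=
  ⟨w ≫ copowerRetraction X, by
    rw [Category.assoc, copowerRetraction_comp_id_sub_copowerShift, Preadditive.comp_sub,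
      ← Category.assoc w (codiagonal X), hw, zero_comp, sub_zero, Category.comp_id]⟩

end ConstantTelescope

lemma id_sub_comp_eq_comp_id_sub {C : Type u} [Category.{v} C] [Preadditive C] {M L : C}
    {φ : M ⟶ L} {σ : M ⟶ M} {τ : L ⟶ L} (hφ : σ ≫ φ = φ ≫ τ) :
    (𝟙 M - σ) ≫ φ = φ ≫ (𝟙 L - τ) := by
  rw [Preadditive.sub_comp, Preadditive.comp_sub, hφ, Category.id_comp, Category.comp_id]

namespace CatIdeal

section Preadditive

variable {C : Type u} [Category.{v} C] [Preadditive C] (I : CatIdeal C)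

/-- `f` is `𝔦`-epic: it is an epimorphism modulo `𝔦`. In a triangulated category this says that
the map from the target of `f` to a cone of `f` lies in `𝔦`. -/
def IsEpic {X Y : C} (f : X ⟶ Y) : Prop :=
  ∀ ⦃Z : C⦄ (g : Y ⟶ Z), f ≫ g = 0 → g ∈ I.carrier Y Z

/-- `s` kills the kernel of `f` modulo `𝔦`. In the tower approximating `X`, each map `aₙ ⟶ aₙ₊₁`
is made to do this for `aₙ ⟶ X`. -/
def KillsKernel {X Y Z : C} (s : X ⟶ Z) (f : X ⟶ Y) : Prop :=
  ∀ ⦃W : C⦄ (g : W ⟶ X), g ≫ f = 0 → g ≫ s ∈ I.carrier W Z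

/-- `f` is `𝔦`-monic: it is a monomorphism modulo `𝔦`. -/
def IsMonic {X Y : C} (f : X ⟶ Y) : Prop :=
  ∀ ⦃W : C⦄ (g : W ⟶ X), g ≫ f = 0 → g ∈ I.carrier W X

/-- `𝔦` has enough projectives: every object admits an `𝔦`-epic map from an `𝔦`-projective. -/
def HasEnoughProjectives : Prop :=
  ∀ X : C, ∃ (Q : C) (q : Q ⟶ X), IsProjI I Q ∧ I.IsEpic q

/-- `𝔦` is compatible with countable direct sums. Only the inclusion
`∏ 𝔦(Xₙ, B) ⊆ 𝔦(∐ Xₙ, B)` is required, the other one being true for every ideal. -/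
def IsSumCompatible [HasCoproductsOfShape ℕ C] : Prop :=
  ∀ ⦃X : ℕ → C⦄ ⦃B : C⦄ (f : ∐ X ⟶ B),
    (∀ n, Sigma.ι X n ≫ f ∈ I.carrier (X n) B) → f ∈ I.carrier (∐ X) B

/-- The `𝔦`-contractible objects, written `𝒩_𝔦`. -/
def contractible : ObjectProperty C :=
  fun N => 𝟙 N ∈ I.carrier N N

variable {I}

lemma _root_.IsProjI.comp_eq_zero {P X Y : C} (hP : IsProjI I P) (x : P ⟶ X) {f : X ⟶ Y}
    (hf : f ∈ I.carrier X Y) : x ≫ f = 0 :=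
  hP Y _ (I.comp_mem_right x f hf)

lemma _root_.IsProjI.leftOrthogonal_contractible {P : C} (hP : IsProjI I P) :
    I.contractible.leftOrthogonal P := fun N f hN => by
  rw [← Category.comp_id f, hP.comp_eq_zero f hN]

lemma IsEpic.of_comp {X Y Z : C} {f : X ⟶ Y} {g : Y ⟶ Z} (hfg : I.IsEpic (f ≫ g)) :
    I.IsEpic g :=
  fun _ h hgh => hfg h (by rw [Category.assoc, hgh, comp_zero])

lemma IsEpic.of_tower {X : C} {a : ℕ → C} {i : ∀ n, a n ⟶ a (n + 1)} {f : ∀ n, a n ⟶ X}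
    (hif : ∀ n, i n ≫ f (n + 1) = f n) (h₀ : I.IsEpic (f 0)) : ∀ n, I.IsEpic (f n)
  | 0 => h₀
  | n + 1 => .of_comp (f := i n) (hif n ▸ IsEpic.of_tower hif h₀ n)

lemma IsEpic.sigmaMap [HasCoproductsOfShape ℕ C] (hsum : I.IsSumCompatible) {X Y : ℕ → C}
    {f : ∀ n, X n ⟶ Y n} (hf : ∀ n, I.IsEpic (f n)) : I.IsEpic (Limits.Sigma.map f) :=
  fun _ g hg => hsum g fun n => hf n _ (by simpa using Sigma.ι X n ≫= hg)

lemma HasEnoughProjectives.isMonic (henough : I.HasEnoughProjectives) {X Y : C} {f : X ⟶ Y}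
    (hf : ∀ P, IsProjI I P → ∀ x : P ⟶ X, x ≫ f = 0 → x = 0) : I.IsMonic f := fun W g hg => by
  obtain ⟨Q, q, hQ, hq⟩ := henough W
  exact hq g (hf Q hQ (q ≫ g) (by rw [Category.assoc, hg, comp_zero]))

lemma KillsKernel.isMonic_id_sub {M L : C} {φ : M ⟶ L} {σ : M ⟶ M} {τ : L ⟶ L}
    (hσ : I.KillsKernel σ φ) (hφ : σ ≫ φ = φ ≫ τ) [Mono (𝟙 L - τ)] :
    I.IsMonic (𝟙 M - σ) := fun W g hg => by
  have hgφ : g ≫ φ = 0 := by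
    rw [← cancel_mono (𝟙 L - τ), Category.assoc, ← id_sub_comp_eq_comp_id_sub hφ,
      ← Category.assoc, hg, zero_comp, zero_comp]
  have hgσ : g = g ≫ σ := by
    rwa [Preadditive.comp_sub, Category.comp_id, sub_eq_zero] at hg
  rw [hgσ]
  exact hσ g hgφ

end Preadditive

section Shift

variable {C : Type u} [Category.{v} C] [Preadditive C] [HasShift C ℤ] {I : CatIdeal C}

/-- `𝔦` is stable under shifts, as is any ideal that is the kernel of a stable functor. -/
def IsShiftStable (I : CatIdeal C) : Prop :=
  ∀ ⦃X Y : C⦄ (f : X ⟶ Y) (n : ℤ), f ∈ I.carrier X Y → f⟦n⟧' ∈ I.carrier (X⟦n⟧) (Y⟦n⟧)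

namespace IsShiftStable

lemma isStableUnderShift_contractible (hshift : I.IsShiftStable) :
    I.contractible.IsStableUnderShift ℤ where
  isStableUnderShiftBy n := ⟨fun N hN => by
    have hmem := hshift (𝟙 N) n hN
    rwa [CategoryTheory.Functor.map_id] at hmem⟩

lemma mem_of_shift_mem (hshift : I.IsShiftStable) {X Y : C} {f : X ⟶ Y} (n : ℤ)
    (hf : f⟦n⟧' ∈ I.carrier (X⟦n⟧) (Y⟦n⟧)) : f ∈ I.carrier X Y := by
  let e := shiftFunctorCompIsoId C n (-n) (add_neg_cancel n)
  have hconj : f = e.inv.app X ≫ f⟦n⟧'⟦-n⟧' ≫ e.hom.app Y := by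
    simp [e, shift_shift_neg']
  rw [hconj]
  exact I.comp_mem_right _ _ (I.comp_mem_left _ _ (hshift _ (-n) hf))

lemma isMonic_shift [∀ n : ℤ, (shiftFunctor C n).Additive] (hshift : I.IsShiftStable)
    {X Y : C} {f : X ⟶ Y} (hf : I.IsMonic f) (n : ℤ) : I.IsMonic (f⟦n⟧') := fun W g hg => by
  let e := shiftFunctorCompIsoId C n (-n) (add_neg_cancel n)
  have hzero : (g⟦-n⟧' ≫ e.hom.app X) ≫ f = 0 := by
    rw [← cancel_mono (e.inv.app Y)]
    simpa [e, shift_shift_neg'] using congrArg (fun k => k⟦-n⟧') hg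
  have hmem := I.comp_mem_left _ (e.inv.app X) (hf _ hzero)
  exact hshift.mem_of_shift_mem (-n) (by simpa using hmem)

end IsShiftStable

end Shift

section Pretriangulated

variable {C : Type u} [Category.{v} C] [Preadditive C] [HasZeroObject C] [HasShift C ℤ]
  [∀ n : ℤ, (shiftFunctor C n).Additive] [Pretriangulated C] {I : CatIdeal C}

lemma _root_.IsProjI.exists_lift {P X Y : C} (hP : IsProjI I P) {f : X ⟶ Y} (hf : I.IsEpic f)
    (x : P ⟶ Y) : ∃ y, x = y ≫ f := by
  obtain ⟨Z, g, h, hT⟩ := distinguished_cocone_triangle f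
  have hg : g ∈ I.carrier Y Z := hf g (comp_distTriang_mor_zero₁₂ _ hT)
  exact Triangle.coyoneda_exact₂ _ hT x (hP.comp_eq_zero x hg)

lemma _root_.IsProjI.exists_eq_comp_id_sub {P M L : C} (hP : IsProjI I P) {φ : M ⟶ L}
    {σ : M ⟶ M} {τ : L ⟶ L} (hepic : I.IsEpic φ) (hσ : I.KillsKernel σ φ)
    (hφ : σ ≫ φ = φ ≫ τ) {w : P ⟶ M} {y : P ⟶ L} (hw : w ≫ φ = y ≫ (𝟙 L - τ)) :
    ∃ u, w = u ≫ (𝟙 M - σ) := by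
  obtain ⟨v, rfl⟩ := hP.exists_lift hepic y
  have hker : (w - v ≫ (𝟙 M - σ)) ≫ φ = 0 := by
    rw [Preadditive.sub_comp, hw, Category.assoc, Category.assoc,
      id_sub_comp_eq_comp_id_sub hφ, sub_self]
  have hfix : (w - v ≫ (𝟙 M - σ)) ≫ (𝟙 M - σ) = w - v ≫ (𝟙 M - σ) := by
    rw [Preadditive.comp_sub, hP _ _ (hσ _ hker), Category.comp_id, sub_zero]
  exact ⟨w - v ≫ (𝟙 M - σ) + v, by rw [Preadditive.add_comp, hfix, sub_add_cancel]⟩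

lemma contractible_of_distTriang (hshift : I.IsShiftStable) (henough : I.HasEnoughProjectives)
    {T : Triangle C} (hT : T ∈ distTriang C) (hepic : I.IsEpic T.mor₁)
    (hmonic : I.IsMonic T.mor₁) : I.contractible T.obj₃ := by
  have hg : T.mor₂ ∈ I.carrier _ _ := hepic _ (comp_distTriang_mor_zero₁₂ _ hT)
  have hh : T.mor₃ ∈ I.carrier _ _ :=
    hshift.isMonic_shift hmonic 1 _ (comp_distTriang_mor_zero₃₁ _ hT)
  obtain ⟨Q, q, hQ, hq⟩ := henough T.obj₃
  obtain ⟨y, hy⟩ := Triangle.coyoneda_exact₃ _ hT q (hQ.comp_eq_zero q hh)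
  exact hq _ (by rw [Category.comp_id, hy, hQ.comp_eq_zero y hg])

lemma KillsKernel.sigmaMap [HasCoproductsOfShape ℕ C] (hsum : I.IsSumCompatible) {a X : ℕ → C}
    {f : ∀ n, a n ⟶ X n} {Z : C} {s : ∐ a ⟶ Z}
    (hs : ∀ n, I.KillsKernel (Sigma.ι a n ≫ s) (f n)) :
    I.KillsKernel s (Limits.Sigma.map f) := fun W u hu => by
  choose K k d hT using fun n => distinguished_cocone_triangle₁ (f n)
  obtain ⟨w, rfl⟩ := exists_eq_comp_sigmaMap hT u hu
  have hks : Limits.Sigma.map k ≫ s ∈ I.carrier _ _ := hsum _ fun n => by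
    simpa using hs n (k n) (comp_distTriang_mor_zero₁₂ _ (hT n))
  rw [Category.assoc]
  exact I.comp_mem_right w _ hks

lemma KillsKernel.isMonic_of_distTriang (hshift : I.IsShiftStable)
    (henough : I.HasEnoughProjectives) {M L X B : C} {φ : M ⟶ L} {σ : M ⟶ M} {τ : L ⟶ L} {p : L ⟶ X}
    [Mono (𝟙 L - τ)]
    (hp : ∀ ⦃W : C⦄ (w : W ⟶ L), w ≫ p = 0 → ∃ v, w = v ≫ (𝟙 L - τ))
    (hepic : I.IsEpic φ) (hσ : I.KillsKernel σ φ) (hφ : σ ≫ φ = φ ≫ τ)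
    {j : M ⟶ B} {δ : B ⟶ M⟦(1 : ℤ)⟧} (hT : Triangle.mk (𝟙 M - σ) j δ ∈ distTriang C)
    {f : B ⟶ X} (hf : φ ≫ p = j ≫ f) : I.IsMonic f :=
  henough.isMonic fun P hP x hx => by
    have hδ : δ ∈ I.carrier _ _ :=
      hshift.isMonic_shift (hσ.isMonic_id_sub hφ) 1 δ (comp_distTriang_mor_zero₃₁ _ hT)
    obtain ⟨w, rfl⟩ : ∃ w : P ⟶ M, x = w ≫ j :=
      Triangle.coyoneda_exact₃ _ hT x (hP.comp_eq_zero x hδ)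
    obtain ⟨y, hy⟩ := hp (w ≫ φ) (by rw [Category.assoc, hf, ← Category.assoc, hx])
    obtain ⟨u, rfl⟩ := hP.exists_eq_comp_id_sub hepic hσ hφ hy
    have hj : (𝟙 M - σ) ≫ j = 0 := comp_distTriang_mor_zero₁₂ _ hT
    rw [Category.assoc, hj, comp_zero]

lemma HasEnoughProjectives.exists_attach_cells (henough : I.HasEnoughProjectives) {T : Set C}
    (hproj : ∀ Q, IsProjI I Q → Q ∈ T)
    (hcone : ∀ S ∈ distTriang C, S.obj₁ ∈ T → S.obj₂ ∈ T → S.obj₃ ∈ T)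
    {X : C} (a : Over X) (ha : a.left ∈ T) :
    ∃ (a' : Over X) (i : a ⟶ a'), a'.left ∈ T ∧ I.KillsKernel i.left a.hom := by
  obtain ⟨K, k, d, hT⟩ := distinguished_cocone_triangle₁ a.hom
  obtain ⟨Q, q, hQ, hq⟩ := henough K
  obtain ⟨b, i, e, hT'⟩ := distinguished_cocone_triangle (q ≫ k)
  have hki : k ≫ i ∈ I.carrier K b := hq _ (by
    rw [← Category.assoc]; exact comp_distTriang_mor_zero₁₂ _ hT')
  have hqk : (q ≫ k) ≫ a.hom = 0 := by
    rw [Category.assoc, show k ≫ a.hom = 0 from comp_distTriang_mor_zero₁₂ _ hT, comp_zero]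
  obtain ⟨f, hf : a.hom = i ≫ f⟩ := Triangle.yoneda_exact₂ _ hT' a.hom hqk
  refine ⟨Over.mk f, Over.homMk i hf.symm, hcone _ hT' (hproj Q hQ) ha, fun W g hg => ?_⟩
  obtain ⟨z, rfl⟩ : ∃ z : W ⟶ K, g = z ≫ k := Triangle.coyoneda_exact₂ _ hT g hg
  rw [Category.assoc]
  exact I.comp_mem_right z _ hki

lemma HasEnoughProjectives.exists_tower (henough : I.HasEnoughProjectives) {T : Set C}
    (hproj : ∀ Q, IsProjI I Q → Q ∈ T)
    (hcone : ∀ S ∈ distTriang C, S.obj₁ ∈ T → S.obj₂ ∈ T → S.obj₃ ∈ T) (X : C) :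
    ∃ (a : ℕ → C) (i : ∀ n, a n ⟶ a (n + 1)) (f : ∀ n, a n ⟶ X), (∀ n, a n ∈ T) ∧
      (∀ n, i n ≫ f (n + 1) = f n) ∧ I.IsEpic (f 0) ∧ ∀ n, I.KillsKernel (i n) (f n) := by
  obtain ⟨Q, q, hQ, hq⟩ := henough X
  choose next i hnext hi using henough.exists_attach_cells (X := X) hproj hcone
  let a (n : ℕ) : {a : Over X // a.left ∈ T} :=
    n.rec ⟨Over.mk q, hproj Q hQ⟩ fun _ b => ⟨next b.1 b.2, hnext b.1 b.2⟩
  exact ⟨fun n => (a n).1.left, fun n => (i (a n).1 (a n).2).left, fun n => (a n).1.hom,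
    fun n => (a n).2, fun n => Over.w (i (a n).1 (a n).2), hq, fun n => hi (a n).1 (a n).2⟩

lemma exists_isEpic_isMonic_of_telescope [HasCoproductsOfShape ℕ C] (hshift : I.IsShiftStable)
    (hsum : I.IsSumCompatible) (henough : I.HasEnoughProjectives)
    {X : C} {a : ℕ → C} {i : ∀ n, a n ⟶ a (n + 1)} {f : ∀ n, a n ⟶ X}
    (hif : ∀ n, i n ≫ f (n + 1) = f n) (h₀ : I.IsEpic (f 0))
    (hi : ∀ n, I.KillsKernel (i n) (f n)) {B : C} {j : ∐ a ⟶ B} {δ : B ⟶ (∐ a)⟦(1 : ℤ)⟧}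
    (hT : Triangle.mk (𝟙 _ - telescopeShift i) j δ ∈ distTriang C) :
    ∃ g : B ⟶ X, I.IsEpic g ∧ I.IsMonic g := by
  let φ : ∐ a ⟶ ∐ fun _ : ℕ => X := Limits.Sigma.map f
  have hφ : telescopeShift i ≫ φ = φ ≫ copowerShift X :=
    telescopeShift_comp_sigmaMap fun n => by rw [hif, Category.comp_id]
  have hepic : I.IsEpic φ := .sigmaMap hsum (.of_tower hif h₀)
  have hσ : I.KillsKernel (telescopeShift i) φ := .sigmaMap hsum fun n W g hg => by
    rw [ι_telescopeShift, ← Category.assoc]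
    exact I.comp_mem_left _ _ (hi n g hg)
  have hzero : (𝟙 _ - telescopeShift i) ≫ φ ≫ codiagonal X = 0 := by
    rw [← Category.assoc, id_sub_comp_eq_comp_id_sub hφ, Category.assoc,
      id_sub_copowerShift_comp_codiagonal, comp_zero]
  obtain ⟨g, hg⟩ : ∃ g : B ⟶ X, φ ≫ codiagonal X = j ≫ g :=
    Triangle.yoneda_exact₂ _ hT (φ ≫ codiagonal X) hzero
  have hι₀ : (Sigma.ι a 0 ≫ j) ≫ g = f 0 := by
    rw [Category.assoc, ← hg]
    simp [φ]
  exact ⟨g, .of_comp (hι₀ ▸ h₀), hσ.isMonic_of_distTriang hshift henough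
    (fun _ _ => exists_eq_comp_id_sub_copowerShift X) hepic hφ hT hg⟩

lemma exists_localisingClosure_isEpic_isMonic [HasCountableCoproducts C] (hshift : I.IsShiftStable)
    (hsum : I.IsSumCompatible) (henough : I.HasEnoughProjectives) (X : C) :
    ∃ B ∈ localisingClosure C {Q | IsProjI I Q}, ∃ f : B ⟶ X, I.IsEpic f ∧ I.IsMonic f := by
  obtain ⟨-, -, hcone, hcoprod⟩ := isLocalising_localisingClosure {Q : C | IsProjI I Q}
  obtain ⟨a, i, f, ha, hif, h₀, hi⟩ :=
    henough.exists_tower (fun _ hQ => subset_localisingClosure _ hQ) hcone X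
  obtain ⟨B, j, δ, hT⟩ := distinguished_cocone_triangle (𝟙 _ - telescopeShift i)
  exact ⟨B, hcone _ hT (hcoprod ℕ a ha) (hcoprod ℕ a ha),
    exists_isEpic_isMonic_of_telescope hshift hsum henough hif h₀ hi hT⟩

end Pretriangulated

section KernelOfFunctor

variable {C : Type u} [Category.{v} C] [Preadditive C] {A : Type u'} [Category.{v'} A]
  [HasZeroMorphisms A] (F : C ⥤ A) [F.PreservesZeroMorphisms] {I : CatIdeal C}

lemma isEpic_of_epi_map (hker : ∀ {X Y : C} (f : X ⟶ Y), F.map f = 0 → f ∈ I.carrier X Y)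
    {X Y : C} (q : X ⟶ Y) [Epi (F.map q)] : I.IsEpic q := fun Z g hg =>
  hker g (by rw [← cancel_epi (F.map q), ← F.map_comp, hg, F.map_zero, comp_zero])

lemma hasEnoughProjectives_of_epi_map
    (hker : ∀ {X Y : C} (f : X ⟶ Y), F.map f = 0 → f ∈ I.carrier X Y)
    (henough : ∀ X : C, ∃ (Q : C) (q : Q ⟶ X), IsProjI I Q ∧ Epi (F.map q)) :
    I.HasEnoughProjectives := fun X => by
  obtain ⟨Q, q, hQ, _⟩ := henough X
  exact ⟨Q, q, hQ, isEpic_of_epi_map F hker q⟩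

end KernelOfFunctor

end CatIdeal

theorem proj_contractible_complementary_general
    {C : Type u} [Category.{v} C] [Preadditive C] [HasZeroObject C] [HasShift C ℤ]
    [∀ n : ℤ, (shiftFunctor C n).Additive] [Pretriangulated C] [HasCountableCoproducts C]
    (I : CatIdeal C) (hshift : I.IsShiftStable) (hsum : I.IsSumCompatible)
    (henough : I.HasEnoughProjectives) :
    (∀ Q ∈ localisingClosure C {Q | IsProjI I Q}, ∀ Y : C,
      𝟙 Y ∈ I.carrier Y Y → ∀ (n : ℤ) (f : Q⟦n⟧ ⟶ Y), f = 0) ∧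
    (∀ X : C, ∃ (Q Y : C) (f : Q ⟶ X) (g : X ⟶ Y) (h : Y ⟶ Q⟦(1 : ℤ)⟧),
      Triangle.mk f g h ∈ (distTriang C) ∧
      Q ∈ localisingClosure C {Q | IsProjI I Q} ∧
      𝟙 Y ∈ I.carrier Y Y) := by
  refine ⟨fun Q hQ Y hY n f => ?_, fun X => ?_⟩
  · have := hshift.isStableUnderShift_contractible
    have hQn : Q⟦n⟧ ∈ localisingClosure C {Q | IsProjI I Q} :=
      (isLocalising_localisingClosure _).2.1 Q hQ n
    exact localisingClosure_subset (fun P hP => hP.leftOrthogonal_contractible)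
      (isLocalising_leftOrthogonal I.contractible) hQn f hY
  · obtain ⟨Q, hQ, f, hepic, hmonic⟩ :=
      CatIdeal.exists_localisingClosure_isEpic_isMonic hshift hsum henough X
    obtain ⟨N, g, h, hT⟩ := distinguished_cocone_triangle f
    exact ⟨Q, N, f, g, h, hT, hQ,
      CatIdeal.contractible_of_distTriang hshift henough hT hepic hmonic⟩

/-- For a homological ideal `𝔦` with enough projective objects, compatible with
countable direct sums, the pair `(⟨Proj_𝔦⟩, 𝒩_𝔦)` is complementary. -/
theorem proj_contractible_complementary
    (C : Type u) [Category.{v} C] [Preadditive C] [HasZeroObject C] [HasShift C ℤ]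
    [∀ n : ℤ, (shiftFunctor C n).Additive] [Pretriangulated C]
    [HasCountableCoproducts C]
    (A : Type u') [Category.{v'} A] [Abelian A]
    (F : C ⥤ A) [F.IsHomological]
    (I : CatIdeal C)
    (hker : ∀ {X Y : C} (f : X ⟶ Y), f ∈ I.carrier X Y ↔ F.map f = 0)
    (hshift : ∀ {X Y : C} (f : X ⟶ Y) (n : ℤ),
      f ∈ I.carrier X Y → (shiftFunctor C n).map f ∈ I.carrier (X⟦n⟧) (Y⟦n⟧))
    -- `𝔦` is compatible with countable direct sums:
    (hsum : ∀ (ι : Type) [Countable ι] (X : ι → C) (B : C) (f : (∐ X) ⟶ B),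
      ((∀ i, Sigma.ι X i ≫ f ∈ I.carrier (X i) B) ↔ f ∈ I.carrier (∐ X) B))
    -- `𝔦` has enough projective objects:
    (henough : ∀ X : C, ∃ (Q : C) (q : Q ⟶ X), IsProjI I Q ∧ Epi (F.map q)) :
    -- orthogonality:
    (∀ Q ∈ localisingClosure C {Q | IsProjI I Q}, ∀ Y : C,
      𝟙 Y ∈ I.carrier Y Y → ∀ (n : ℤ) (f : Q⟦n⟧ ⟶ Y), f = 0) ∧
    -- exact triangles `Ã → A → N → Ã[1]`:
    (∀ X : C, ∃ (Q Y : C) (f : Q ⟶ X) (g : X ⟶ Y) (h : Y ⟶ Q⟦(1 : ℤ)⟧),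
      Triangle.mk f g h ∈ (distTriang C) ∧
      Q ∈ localisingClosure C {Q | IsProjI I Q} ∧
      𝟙 Y ∈ I.carrier Y Y) :=
  proj_contractible_complementary_general I (fun _ _ => hshift) (fun X B f => (hsum ℕ X B f).1)
    (CatIdeal.hasEnoughProjectives_of_epi_map F (fun f => (hker f).2) henough)
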